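/- Let A = (Q, X, q₀, T, F) be an updateable timed automaton and let {G(q)}_{q ∈ Q} be the least solution to the state-based guard equations for updateable timed automata. Then the relation ≼_A on configurations of A, defined by (q, v) ≼_A (q, v') iff v ⊑_{G(q)} v', is a simulation on the configurations of A. -/

import Mathlib

open scoped NNReal

/-! ## Atomic constraints over a set of clocks -/

/-- Comparison operator `◁ ∈ {<, ≤}`. -/
inductive Ineq : Type where
  | lt : Ineq
  | le : Ineq
deriving DecidableEq

/-- Interpretation of a comparison operator on reals. -/
def Ineq.holds : Ineq → ℝ → ℝ → Prop
  | .lt, a, b => a < b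
  | .le, a, b => a ≤ b

/-- Atomic constraints over clocks `X`:
`upper x o c` is `x ◁ c` (c ∈ ℕ), `lower c o x` is `c ◁ x` (c ∈ ℕ),
`diag x y o d` is `x - y ◁ d` (d ∈ ℤ). -/
inductive Constr (X : Type) : Type where
  | upper : X → Ineq → ℕ → Constr X
  | lower : ℕ → Ineq → X → Constr X
  | diag : X → X → Ineq → ℤ → Constr X
deriving DecidableEq

namespace Constr

/-- Is the constraint a diagonal constraint `x - y ◁ d`? -/
def isDiag {X : Type} : Constr X → Bool
  | .diag _ _ _ _ => true
  | _ => false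

/-- The integer constant of a constraint. -/
def constOf {X : Type} : Constr X → ℤ
  | .upper _ _ c => (c : ℤ)
  | .lower c _ _ => (c : ℤ)
  | .diag _ _ _ d => d

/-- Satisfaction of a constraint by a clock valuation `v : X → ℝ≥0`. -/
def sat {X : Type} (v : X → ℝ≥0) : Constr X → Prop
  | .upper x o c => o.holds (v x : ℝ) (c : ℝ)
  | .lower c o x => o.holds (c : ℝ) (v x : ℝ)
  | .diag x y o d => o.holds ((v x : ℝ) - (v y : ℝ)) (d : ℝ)

end Constr

/-- Time elapse: `v + δ`. -/
def shift {X : Type} (v : X → ℝ≥0) (δ : ℝ≥0) : X → ℝ≥0 := fun x => v x + δ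

/-- The relation `v ⊑_G v'`: for all `φ ∈ G` and all delays `δ ≥ 0`,
`v + δ ⊨ φ` implies `v' + δ ⊨ φ`. -/
def simG {X : Type} (G : Set (Constr X)) (v v' : X → ℝ≥0) : Prop :=
  ∀ φ ∈ G, ∀ δ : ℝ≥0, Constr.sat (shift v δ) φ → Constr.sat (shift v' δ) φ

/-- `Z ⊑_G Z'` on sets of valuations. -/
def simGZ {X : Type} (G : Set (Constr X)) (Z Z' : Set (X → ℝ≥0)) : Prop :=
  ∀ v ∈ Z, ∃ v' ∈ Z', simG G v v'

open Classical in
/-- `[R]v`: reset the clocks in `R` to `0`. -/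
noncomputable def reset {X : Type} (R : Set X) (v : X → ℝ≥0) : X → ℝ≥0 :=
  fun x => if x ∈ R then 0 else v x

/-- Weakest precondition `wp(⊑_φ, R)` of a single constraint over a reset. -/
def wpReset {X : Type} (R : Set X) : Constr X → Set (Constr X)
  | .upper x o c => {ψ | x ∉ R ∧ ψ = .upper x o c}
  | .lower c o x => {ψ | x ∉ R ∧ ψ = .lower c o x}
  | .diag x y o d =>
      {ψ | (x ∉ R ∧ y ∉ R ∧ ψ = .diag x y o d) ∨
           (x ∉ R ∧ y ∈ R ∧ 0 ≤ d ∧ ψ = .upper x o d.toNat) ∨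
           (x ∈ R ∧ y ∉ R ∧ 0 ≤ -d ∧ ψ = .lower (-d).toNat o y)}

/-- Weakest precondition `wp(⊑_G, R)` of a set of constraints over a reset. -/
def wpResetSet {X : Type} (R : Set X) (G : Set (Constr X)) : Set (Constr X) :=
  ⋃ φ ∈ G, wpReset R φ

/-! ## Timed automata -/

/-- A transition: source state, guard (finite conjunction of constraints),
reset set, target state. -/
abbrev TTrans (Q X : Type) : Type := Q × Finset (Constr X) × Set X × Q

def TTrans.src {Q X : Type} (t : TTrans Q X) : Q := t.1
def TTrans.grd {Q X : Type} (t : TTrans Q X) : Finset (Constr X) := t.2.1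
def TTrans.rst {Q X : Type} (t : TTrans Q X) : Set X := t.2.2.1
def TTrans.tgt {Q X : Type} (t : TTrans Q X) : Q := t.2.2.2

/-- A timed automaton. -/
structure TA (Q X : Type) : Type where
  init : Q
  trans : Finset (TTrans Q X)
  acc : Set Q

/-- Action step of a timed automaton along transition `t`. -/
def Step {Q X : Type} (A : TA Q X) (t : TTrans Q X) (c c' : Q × (X → ℝ≥0)) : Prop :=
  t ∈ A.trans ∧ TTrans.src t = c.1 ∧ (∀ φ ∈ TTrans.grd t, Constr.sat c.2 φ) ∧
    c'.1 = TTrans.tgt t ∧ c'.2 = reset (TTrans.rst t) c.2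

/-- `r` is a simulation on the configurations of `A`: a reflexive transitive
relation, relating only configurations with equal states, compatible with
delays and action transitions. -/
def IsSimulation {Q X : Type} (A : TA Q X)
    (r : (Q × (X → ℝ≥0)) → (Q × (X → ℝ≥0)) → Prop) : Prop :=
  Reflexive r ∧ Transitive r ∧
  ∀ q v q' v', r (q, v) (q', v') →
    q = q' ∧
    (∀ δ : ℝ≥0, ∃ δ' : ℝ≥0, r (q, shift v δ) (q, shift v' δ')) ∧
    (∀ t c₁, Step A t (q, v) c₁ →
      ∃ v₁', Step A t (q, v') (c₁.1, v₁') ∧ r c₁ (c₁.1, v₁'))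

/-- The state-based guard equations:
`G(q) = ⋃_{(q,g,R,q₁) ∈ T} ({g} ∪ wp(⊑_{G(q₁)}, R))`. -/
def GuardEq {Q X : Type} (A : TA Q X) (G : Q → Set (Constr X)) : Prop :=
  ∀ q, G q = ⋃ t ∈ A.trans, ⋃ (_ : TTrans.src t = q),
    ((TTrans.grd t : Set (Constr X)) ∪ wpResetSet (TTrans.rst t) (G (TTrans.tgt t)))

/-! ## LU bounds -/

def lowerConstAt {X : Type} [DecidableEq X] (x : X) : Constr X → WithBot ℕ
  | .lower c _ y => if y = x then (c : WithBot ℕ) else ⊥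
  | _ => ⊥

def upperConstAt {X : Type} [DecidableEq X] (x : X) : Constr X → WithBot ℕ
  | .upper y _ c => if y = x then (c : WithBot ℕ) else ⊥
  | _ => ⊥

/-- `L_G(x)`: maximum constant among lower-bound constraints `c ◁ x` in `G`
(`⊥ = -∞` if none). -/
def Lbound {X : Type} [DecidableEq X] (G : Finset (Constr X)) (x : X) : WithBot ℕ :=
  G.sup (lowerConstAt x)

/-- `U_G(x)`: maximum constant among upper-bound constraints `x ◁ c` in `G`
(`⊥ = -∞` if none). -/
def Ubound {X : Type} [DecidableEq X] (G : Finset (Constr X)) (x : X) : WithBot ℕ :=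
  G.sup (upperConstAt x)

/-- The LU simulation `v ≼_LU v'` for bounds functions `L U : X → ℕ ∪ {-∞}`. -/
def luSim {X : Type} (L U : X → WithBot ℕ) (v v' : X → ℝ≥0) : Prop :=
  ∀ x : X,
    (v' x < v x → (L x).map (fun c : ℕ => (c : ℝ)) < ((v' x : ℝ) : WithBot ℝ)) ∧
    (v x < v' x → (U x).map (fun c : ℕ => (c : ℝ)) < ((v x : ℝ) : WithBot ℝ))

/-- The relation `v ⊑^LU_G v'`: `v ≼_{LU(G)} v'` and every diagonal constraint
of `G` satisfied by `v` is satisfied by `v'`. -/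
def luglu {X : Type} [DecidableEq X] (G : Finset (Constr X)) (v v' : X → ℝ≥0) : Prop :=
  luSim (Lbound G) (Ubound G) v v' ∧
    ∀ φ ∈ G, φ.isDiag → Constr.sat v φ → Constr.sat v' φ

/-- Lifting a relation on valuations to sets of valuations. -/
def zoneRel {X : Type} (r : (X → ℝ≥0) → (X → ℝ≥0) → Prop) (Z Z' : Set (X → ℝ≥0)) : Prop :=
  ∀ v ∈ Z, ∃ v' ∈ Z', r v v'

/-! ## Runs of timed automata -/

/-- `stepsFrom A c l`: the alternating delay-action sequence `l` is a valid
sequence of steps of `A` starting at configuration `c`. -/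
def stepsFrom {Q X : Type} (A : TA Q X) :
    (Q × (X → ℝ≥0)) → List (ℝ≥0 × TTrans Q X) → Prop
  | _, [] => True
  | c, (δ, t) :: l =>
      t ∈ A.trans ∧ TTrans.src t = c.1 ∧
      (∀ φ ∈ TTrans.grd t, Constr.sat (shift c.2 δ) φ) ∧
      stepsFrom A (TTrans.tgt t, reset (TTrans.rst t) (shift c.2 δ)) l

/-- Configuration reached after a sequence of delay-action steps. -/
noncomputable def endConfig {Q X : Type} :
    (Q × (X → ℝ≥0)) → List (ℝ≥0 × TTrans Q X) → (Q × (X → ℝ≥0))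
  | c, [] => c
  | c, (δ, t) :: l => endConfig (TTrans.tgt t, reset (TTrans.rst t) (shift c.2 δ)) l

/-- A run of `A`: a valid sequence of delay-action steps from `(q₀, 0̄)`. -/
def TA.Run {Q X : Type} (A : TA Q X) : Type :=
  {l : List (ℝ≥0 × TTrans Q X) // stepsFrom A (A.init, fun _ => 0) l}

/-- A run is accepting if it ends in an accepting state. -/
def TA.Accepting {Q X : Type} (A : TA Q X) (r : A.Run) : Prop :=
  (endConfig (A.init, fun _ => 0) r.val).1 ∈ A.acc

/-- `A` is diagonal-free: no guard contains a diagonal constraint. -/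
def DiagFree {Q X : Type} (A : TA Q X) : Prop :=
  ∀ t ∈ A.trans, ∀ φ ∈ TTrans.grd t, ¬ φ.isDiag

/-- The (finite) set of diagonal constraints occurring in guards of `A`. -/
def diagGuards {Q X : Type} [DecidableEq X] (A : TA Q X) : Finset (Constr X) :=
  A.trans.biUnion fun t => (TTrans.grd t).filter fun φ => φ.isDiag

/-! ## Updateable timed automata -/

/-- Atomic update of a clock: `x := c` or `x := y + d`. -/
inductive AtomicUp (X : Type) : Type where
  | const : ℕ → AtomicUp X
  | add : X → ℤ → AtomicUp X
deriving DecidableEq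

/-- `up(v) : X → ℝ` (may be negative). -/
def applyUpd {X : Type} (up : X → AtomicUp X) (v : X → ℝ≥0) : X → ℝ :=
  fun x => match up x with
    | .const c => (c : ℝ)
    | .add y d => (v y : ℝ) + (d : ℝ)

/-- Weakest precondition `wp(⊑_φ, up)` of a single constraint over an update. -/
def wpUpd {X : Type} [DecidableEq X] (up : X → AtomicUp X) : Constr X → Set (Constr X)
  | .upper x o c =>
      match up x with
      | .const _ => ∅
      | .add y d => if 0 ≤ (c : ℤ) - d then {Constr.upper y o ((c : ℤ) - d).toNat} else ∅
  | .lower c o x =>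
      match up x with
      | .const _ => ∅
      | .add y d => if 0 ≤ (c : ℤ) - d then {Constr.lower ((c : ℤ) - d).toNat o y} else ∅
  | .diag x y o c =>
      match up x, up y with
      | .const _, .const _ => ∅
      | .add y₁ d₁, .const c₂ =>
          if 0 ≤ c + (c₂ : ℤ) - d₁ then {Constr.upper y₁ o (c + (c₂ : ℤ) - d₁).toNat} else ∅
      | .const c₁, .add y₂ d₂ =>
          if 0 ≤ (c₁ : ℤ) - d₂ - c then {Constr.lower ((c₁ : ℤ) - d₂ - c).toNat o y₂} else ∅
      | .add y₁ d₁, .add y₂ d₂ =>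
          if y₁ = y₂ then ∅ else {Constr.diag y₁ y₂ o (c - d₁ + d₂)}

/-- Weakest precondition `wp(⊑_G, up)` of a set of constraints over an update. -/
def wpUpdSet {X : Type} [DecidableEq X] (up : X → AtomicUp X) (G : Set (Constr X)) :
    Set (Constr X) :=
  ⋃ φ ∈ G, wpUpd up φ

/-- The set of constraints `{0 ≤ x | x ∈ X}`. -/
def nonnegConstrs (X : Type) : Set (Constr X) := {φ | ∃ x : X, φ = Constr.lower 0 Ineq.le x}

/-- A transition of an updateable timed automaton: source, guard, update, target. -/
abbrev UTrans (Q X : Type) : Type := Q × Finset (Constr X) × (X → AtomicUp X) × Q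

def UTrans.src {Q X : Type} (t : UTrans Q X) : Q := t.1
def UTrans.grd {Q X : Type} (t : UTrans Q X) : Finset (Constr X) := t.2.1
def UTrans.upd {Q X : Type} (t : UTrans Q X) : X → AtomicUp X := t.2.2.1
def UTrans.tgt {Q X : Type} (t : UTrans Q X) : Q := t.2.2.2

/-- An updateable timed automaton. -/
structure UTA (Q X : Type) : Type where
  init : Q
  trans : Finset (UTrans Q X)
  acc : Set Q

/-- Action step of an updateable timed automaton along transition `t`:
the guard holds, `up(v) ≥ 0`, and the new valuation is `up(v)`. -/
def UStep {Q X : Type} (A : UTA Q X) (t : UTrans Q X) (c c' : Q × (X → ℝ≥0)) : Prop :=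
  t ∈ A.trans ∧ UTrans.src t = c.1 ∧ (∀ φ ∈ UTrans.grd t, Constr.sat c.2 φ) ∧
    c'.1 = UTrans.tgt t ∧ ∀ x, (c'.2 x : ℝ) = applyUpd (UTrans.upd t) c.2 x

/-- `r` is a simulation on configurations of an updateable timed automaton. -/
def IsSimulationU {Q X : Type} (A : UTA Q X)
    (r : (Q × (X → ℝ≥0)) → (Q × (X → ℝ≥0)) → Prop) : Prop :=
  Reflexive r ∧ Transitive r ∧
  ∀ q v q' v', r (q, v) (q', v') →
    q = q' ∧
    (∀ δ : ℝ≥0, ∃ δ' : ℝ≥0, r (q, shift v δ) (q, shift v' δ')) ∧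
    (∀ t c₁, UStep A t (q, v) c₁ →
      ∃ v₁', UStep A t (q, v') (c₁.1, v₁') ∧ r c₁ (c₁.1, v₁'))

/-- State-based guard equations for updateable timed automata. -/
def GuardEqU {Q X : Type} [DecidableEq X] (A : UTA Q X) (G : Q → Set (Constr X)) : Prop :=
  ∀ q, G q = ⋃ t ∈ A.trans, ⋃ (_ : UTrans.src t = q),
    ((UTrans.grd t : Set (Constr X)) ∪ wpUpdSet (UTrans.upd t) (nonnegConstrs X)
      ∪ wpUpdSet (UTrans.upd t) (G (UTrans.tgt t)))

/-- Kleene iterates `G^i(q)` of the state-based guard equations. -/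
def iterG {Q X : Type} [DecidableEq X] (A : UTA Q X) : ℕ → Q → Set (Constr X)
  | 0 => fun q => ⋃ t ∈ A.trans, ⋃ (_ : UTrans.src t = q),
      ((UTrans.grd t : Set (Constr X)) ∪ wpUpdSet (UTrans.upd t) (nonnegConstrs X))
  | (i + 1) => fun q => iterG A i q ∪
      (⋃ t ∈ A.trans, ⋃ (_ : UTrans.src t = q),
        wpUpdSet (UTrans.upd t) (iterG A i (UTrans.tgt t)))

/-- `G^{i+1}(q)` is coloured red: a new diagonal constraint was added, or a new
non-diagonal constraint whose constant is strictly bigger than the constant of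
every non-diagonal constraint of the same kind on the same clock in `G^i(q)`. -/
def RedAt {Q X : Type} [DecidableEq X] (A : UTA Q X) : ℕ → Q → Prop
  | 0, _ => False
  | (i + 1), q =>
      (∃ φ : Constr X, φ ∈ iterG A (i + 1) q ∧ φ ∉ iterG A i q ∧ φ.isDiag) ∨
      (∃ (x : X) (o : Ineq) (c : ℕ),
        Constr.upper x o c ∈ iterG A (i + 1) q ∧ Constr.upper x o c ∉ iterG A i q ∧
        ∀ (o' : Ineq) (c' : ℕ), Constr.upper x o' c' ∈ iterG A i q → c' < c) ∨
      (∃ (x : X) (o : Ineq) (c : ℕ),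
        Constr.lower c o x ∈ iterG A (i + 1) q ∧ Constr.lower c o x ∉ iterG A i q ∧
        ∀ (o' : Ineq) (c' : ℕ), Constr.lower c' o' x ∈ iterG A i q → c' < c)

/-- `G^i(q)` is coloured green. -/
def GreenAt {Q X : Type} [DecidableEq X] (A : UTA Q X) (i : ℕ) (q : Q) : Prop :=
  ¬ RedAt A i q

/-- Absolute value of the constant of an atomic update. -/
def updBound {X : Type} : AtomicUp X → ℕ
  | .const c => c
  | .add _ d => d.natAbs

/-! ## The statement -/


lemma Ineq.holds_congr_sub {o : Ineq} {a b a' b' : ℝ} (h : a - b = a' - b') :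
    o.holds a b ↔ o.holds a' b' := by
  cases o <;> simp only [Ineq.holds] <;> constructor <;> intro h' <;> linarith

lemma Ineq.le_of_holds {o : Ineq} {a b : ℝ} (h : o.holds a b) : a ≤ b := by
  cases o
  · exact le_of_lt h
  · exact h

lemma Ineq.holds_of_lt {o : Ineq} {a b : ℝ} (h : a < b) : o.holds a b := by
  cases o
  · exact h
  · exact le_of_lt h

lemma toNat_real {z : ℤ} (h : 0 ≤ z) : ((z.toNat : ℕ) : ℝ) = (z : ℝ) := by
  have : ((z.toNat : ℕ) : ℤ) = z := Int.toNat_of_nonneg h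
  exact_mod_cast this

lemma neg_real {z : ℤ} (h : ¬ 0 ≤ z) : (z : ℝ) < 0 := by
  exact_mod_cast not_le.mp h

lemma wpUpd_sound {X : Type} [DecidableEq X] (up : X → AtomicUp X) (φ : Constr X)
    (v v' w w' : X → ℝ≥0) (hw : ∀ x, (w x : ℝ) = applyUpd up v x)
    (hw' : ∀ x, (w' x : ℝ) = applyUpd up v' x)
    (h : simG (wpUpd up φ) v v') (δ : ℝ≥0) (hs : Constr.sat (shift w δ) φ) :
    Constr.sat (shift w' δ) φ := by
  have hδ := δ.coe_nonneg
  cases φ with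
  | upper x o c =>
    have h1 := hw x
    have h2 := hw' x
    simp only [applyUpd] at h1 h2
    simp only [wpUpd] at h
    simp only [Constr.sat, shift, NNReal.coe_add] at hs ⊢
    cases hx : up x with
    | const k =>
      simp only [hx] at h1 h2
      rwa [h2, ← h1]
    | add y d =>
      simp only [hx] at h1 h2 h
      have hy := (v y).coe_nonneg
      by_cases hc : 0 ≤ (c : ℤ) - d
      · rw [if_pos hc] at h
        have := h _ rfl δ
        simp only [Constr.sat, shift, NNReal.coe_add, toNat_real hc] at this
        push_cast at this
        refine (Ineq.holds_congr_sub ?_).mp (this ((Ineq.holds_congr_sub ?_).mp hs)) <;> linarith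
      · have := neg_real hc
        have := Ineq.le_of_holds hs
        push_cast at *
        linarith
  | lower c o x =>
    have h1 := hw x
    have h2 := hw' x
    simp only [applyUpd] at h1 h2
    simp only [wpUpd] at h
    simp only [Constr.sat, shift, NNReal.coe_add] at hs ⊢
    cases hx : up x with
    | const k =>
      simp only [hx] at h1 h2
      rwa [h2, ← h1]
    | add y d =>
      simp only [hx] at h1 h2 h
      have hy := (v' y).coe_nonneg
      by_cases hc : 0 ≤ (c : ℤ) - d
      · rw [if_pos hc] at h
        have := h _ rfl δ
        simp only [Constr.sat, shift, NNReal.coe_add, toNat_real hc] at this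
        push_cast at this
        refine (Ineq.holds_congr_sub ?_).mp (this ((Ineq.holds_congr_sub ?_).mp hs)) <;> linarith
      · have := neg_real hc
        apply Ineq.holds_of_lt
        push_cast at *
        linarith
  | diag x y o c =>
    have h1 := hw x
    have h2 := hw' x
    have h3 := hw y
    have h4 := hw' y
    simp only [applyUpd] at h1 h2 h3 h4
    simp only [wpUpd] at h
    simp only [Constr.sat, shift, NNReal.coe_add] at hs ⊢
    cases hx : up x with
    | const k =>
      cases hy : up y with
      | const l =>
        simp only [hx, hy] at h1 h2 h3 h4
        rwa [h2, h4, ← h1, ← h3]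
      | add y₂ d₂ =>
        simp only [hx, hy] at h1 h2 h3 h4 h
        have hp := (v' y₂).coe_nonneg
        by_cases hc : 0 ≤ (k : ℤ) - d₂ - c
        · rw [if_pos hc] at h
          have := h _ rfl 0
          simp only [Constr.sat, shift, add_zero, toNat_real hc] at this
          push_cast at this
          refine (Ineq.holds_congr_sub ?_).mp (this ((Ineq.holds_congr_sub ?_).mp hs)) <;> linarith
        · have := neg_real hc
          apply Ineq.holds_of_lt
          push_cast at *
          linarith
    | add y₁ d₁ =>
      cases hy : up y with
      | const l =>
        simp only [hx, hy] at h1 h2 h3 h4 h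
        have hp := (v y₁).coe_nonneg
        by_cases hc : 0 ≤ c + (l : ℤ) - d₁
        · rw [if_pos hc] at h
          have := h _ rfl 0
          simp only [Constr.sat, shift, add_zero, toNat_real hc] at this
          push_cast at this
          refine (Ineq.holds_congr_sub ?_).mp (this ((Ineq.holds_congr_sub ?_).mp hs)) <;> linarith
        · have := neg_real hc
          have := Ineq.le_of_holds hs
          push_cast at *
          linarith
      | add y₂ d₂ =>
        simp only [hx, hy] at h1 h2 h3 h4 h
        by_cases hc : y₁ = y₂
        · subst hc
          refine (Ineq.holds_congr_sub ?_).mp hs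
          linarith
        · rw [if_neg hc] at h
          have := h _ rfl 0
          simp only [Constr.sat, shift, add_zero] at this
          push_cast at this
          refine (Ineq.holds_congr_sub ?_).mp (this ((Ineq.holds_congr_sub ?_).mp hs)) <;> linarith

lemma wpUpd_nonneg {X : Type} [DecidableEq X] (up : X → AtomicUp X) (x : X)
    (v v' w : X → ℝ≥0) (hw : ∀ x, (w x : ℝ) = applyUpd up v x)
    (h : simG (wpUpd up (Constr.lower 0 Ineq.le x)) v v') : 0 ≤ applyUpd up v' x := by
  have h1 := hw x
  have h0 := (w x).coe_nonneg
  simp only [applyUpd] at h1 ⊢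
  simp only [wpUpd] at h
  cases hx : up x with
  | const k => simp
  | add y d =>
    simp only [hx] at h1 h ⊢
    have hp := (v' y).coe_nonneg
    by_cases hc : 0 ≤ ((0 : ℕ) : ℤ) - d
    · rw [if_pos hc] at h
      have := h _ rfl 0
      simp only [Constr.sat, shift, add_zero, toNat_real hc, Ineq.holds] at this
      push_cast at this
      have := this (by linarith)
      linarith
    · have := neg_real hc
      push_cast at this
      linarith

theorem stmt13 {Q X : Type} [Fintype Q] [Fintype X] [DecidableEq X] (A : UTA Q X)
    (G : Q → Set (Constr X)) (hfix : GuardEqU A G)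
    (hleast : ∀ G' : Q → Set (Constr X), GuardEqU A G' → ∀ q, G q ⊆ G' q) :
    IsSimulationU A (fun c c' => c.1 = c'.1 ∧ simG (G c.1) c.2 c'.2) := by
  refine ⟨fun c => ⟨rfl, fun _ _ _ h => h⟩, ?_, ?_⟩
  · rintro ⟨q, v⟩ ⟨q', v'⟩ ⟨q'', v''⟩ ⟨h1, h2⟩ ⟨h3, h4⟩
    simp only at h1 h2 h3 h4
    subst h1 h3
    exact ⟨rfl, fun φ hφ δ h => h4 φ hφ δ (h2 φ hφ δ h)⟩
  · rintro q v q' v' ⟨h1, h2⟩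
    simp only at h1 h2
    subst h1
    have hsh : ∀ (u : X → ℝ≥0) (a b : ℝ≥0), shift (shift u a) b = shift u (a + b) := by
      intro u a b
      funext x
      simp [shift, add_assoc]
    refine ⟨rfl, fun δ => ⟨δ, rfl, ?_⟩, ?_⟩
    · intro φ hφ δ' h
      rw [hsh] at h ⊢
      exact h2 φ hφ _ h
    · rintro t ⟨q₁, w⟩ ⟨ht, hsrc, hg, hq₁, hw⟩
      simp only at hsrc hg hq₁ hw
      subst hq₁
      have hsub : (UTrans.grd t : Set (Constr X)) ∪ wpUpdSet (UTrans.upd t) (nonnegConstrs X)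
          ∪ wpUpdSet (UTrans.upd t) (G (UTrans.tgt t)) ⊆ G q := by
        intro φ hφ
        rw [hfix q]
        exact Set.mem_iUnion₂.mpr ⟨t, ht, Set.mem_iUnion.mpr ⟨hsrc, hφ⟩⟩
      have hnn : ∀ x, 0 ≤ applyUpd (UTrans.upd t) v' x := by
        intro x
        refine wpUpd_nonneg _ x v v' w hw fun ψ hψ => h2 ψ (hsub (Or.inl (Or.inr ?_)))
        exact Set.mem_iUnion₂.mpr ⟨_, ⟨x, rfl⟩, hψ⟩
      refine ⟨fun x => ⟨_, hnn x⟩, ⟨ht, hsrc, ?_, rfl, fun x => rfl⟩, rfl, ?_⟩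
      · intro φ hφ
        have hz : ∀ u : X → ℝ≥0, shift u 0 = u := by
          intro u
          funext x
          simp [shift]
        have := h2 φ (hsub (Or.inl (Or.inl hφ))) 0
        rw [hz, hz] at this
        exact this (hg φ hφ)
      · intro φ hφ δ hs
        refine wpUpd_sound (UTrans.upd t) φ v v' w _ hw (fun x => rfl) ?_ δ hs
        intro ψ hψ
        exact h2 ψ (hsub (Or.inr (Set.mem_iUnion₂.mpr ⟨φ, hφ, hψ⟩)))
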